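/- Let a, b, N ≥ 0 be integers. Then in ℚ(q) one has P(2(N+b), a) · P(2N, b) = [a+b choose a] · P(2N, a+b). -/

import Mathlib

open scoped BigOperators

noncomputable section

/-- The field ℚ(q). -/
abbrev K : Type := RatFunc ℚ

/-- The variable q. -/
def qq : K := RatFunc.X

/-- The quantum integer [n] = 1 + q + ⋯ + q^{n-1}. -/
def qint (n : ℕ) : K := ∑ i ∈ Finset.range n, qq ^ i

/-- The quantum factorial [n]! = [1][2]⋯[n]. -/
def qfact (n : ℕ) : K := ∏ i ∈ Finset.range n, qint (i + 1)

/-- The Gaussian binomial coefficient [n choose k] = [n]!/([k]!·[n-k]!),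
with the convention that it is 0 when k > n. -/
def qbinom (n k : ℕ) : K :=
  if k ≤ n then qfact n / (qfact k * qfact (n - k)) else 0

/-- a_{(2m-1,N)} = [N+2m]/[2m] and a_{(2m,N)} = [2N+2m]/[N+2m]:
for odd j = 2m-1 this is [N+j+1]/[j+1], for even j = 2m this is [2N+j]/[N+j]. -/
def aB (j N : ℕ) : K :=
  if Odd j then qint (N + j + 1) / qint (j + 1) else qint (2 * N + j) / qint (N + j)

/-- P(M,N) = ∏_{i=1}^{N}(1+q^i) · ∏_{j=1}^{M} a_{(j,N)}. -/
def P (M N : ℕ) : K :=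
  (∏ i ∈ Finset.range N, (1 + qq ^ (i + 1))) * ∏ j ∈ Finset.range M, aB (j + 1) N

lemma qint_ne (n : ℕ) (hn : 0 < n) : qint n ≠ 0 := by
  have h : qint n = algebraMap (Polynomial ℚ) K (∑ i ∈ Finset.range n, Polynomial.X ^ i) := by
    simp [qint, qq, map_sum, map_pow, RatFunc.algebraMap_X]
  rw [h]
  intro h0
  have h1 := (map_eq_zero_iff _ (RatFunc.algebraMap_injective ℚ)).1 h0
  have h2 := congrArg (Polynomial.eval 1) h1
  simp [Polynomial.eval_finset_sum] at h2
  omega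

lemma qint_two (n : ℕ) : (1 + qq ^ n) * qint n = qint (2 * n) := by
  unfold qint
  rw [two_mul, Finset.sum_range_add]
  simp_rw [pow_add]
  rw [← Finset.mul_sum]
  ring

def EE (n : ℕ) : K := ∏ i ∈ Finset.range n, qint (2 * (i + 1))

lemma EE_ne (n : ℕ) : EE n ≠ 0 :=
  Finset.prod_ne_zero_iff.2 fun i _ => qint_ne _ (by omega)

lemma qfact_ne (n : ℕ) : qfact n ≠ 0 :=
  Finset.prod_ne_zero_iff.2 fun i _ => qint_ne _ (by omega)

lemma EE_succ (n : ℕ) : EE (n + 1) = EE n * qint (2 * (n + 1)) := Finset.prod_range_succ _ _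

lemma P_key (N n : ℕ) : P (2 * N) n = EE (n + N) / (qfact n * EE N) := by
  rw [eq_div_iff (mul_ne_zero (qfact_ne n) (EE_ne N))]
  induction N with
  | zero =>
    simp only [P, EE, qfact, Nat.mul_zero, Finset.prod_range_zero, mul_one, Nat.add_zero]
    rw [← Finset.prod_mul_distrib]
    exact Finset.prod_congr rfl fun i _ => qint_two _
  | succ N ih =>
    have hP : P (2 * (N + 1)) n = P (2 * N) n * (aB (2 * N + 1) n * aB (2 * N + 2) n) := by
      rw [show 2 * (N + 1) = 2 * N + 1 + 1 by ring]
      simp only [P, Finset.prod_range_succ]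
      ring
    have ha : aB (2 * N + 1) n * aB (2 * N + 2) n * qint (2 * (N + 1))
        = qint (2 * (n + N + 1)) := by
      have o1 : Odd (2 * N + 1) := ⟨N, rfl⟩
      have o2 : ¬ Odd (2 * N + 2) := by
        rintro ⟨k, hk⟩
        omega
      rw [aB, aB, if_pos o1, if_neg o2]
      have e1 := qint_ne (n + (2 * N + 2)) (by omega)
      have e2 := qint_ne (2 * N + 2) (by omega)
      rw [show n + (2 * N + 1) + 1 = n + (2 * N + 2) by ring,
        show 2 * N + 1 + 1 = 2 * N + 2 by ring, show 2 * (N + 1) = 2 * N + 2 by ring,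
        show 2 * (n + N + 1) = 2 * n + (2 * N + 2) by ring]
      field_simp
    rw [hP, ← Nat.add_assoc, EE_succ, EE_succ, ← ih, ← ha]
    ring

theorem stmt_5 (a b N : ℕ) :
    P (2 * (N + b)) a * P (2 * N) b = qbinom (a + b) a * P (2 * N) (a + b) := by
  rw [P_key, P_key, P_key, qbinom, if_pos (Nat.le_add_right a b), Nat.add_sub_cancel_left,
    show a + (N + b) = a + b + N by ring, show b + N = N + b by ring]
  have h1 := EE_ne N
  have h2 := EE_ne (N + b)
  have h3 := qfact_ne a
  have h4 := qfact_ne b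
  have h5 := qfact_ne (a + b)
  field_simp
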